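/- Let Â = A + εB be an n×n dual matrix possessing a dual core generalized inverse Ĝ, let C be a core inverse of A, and let P be the Moore–Penrose inverse of A. Then Ĝ = C − ε·C·B·C if and only if rank(A²) = rank(A) and (Iₙ − A·P)·B = 0. -/

import Mathlib

open Matrix

/-- The dual matrix `A + εB`, viewed as a matrix over the dual numbers `ℝ[ε]`. -/
def dm {n : ℕ} (A B : Matrix (Fin n) (Fin n) ℝ) :
    Matrix (Fin n) (Fin n) (DualNumber ℝ) :=
  fun i j => TrivSqZeroExt.inl (A i j) + TrivSqZeroExt.inr (B i j)

/-- A dual matrix has dual index one iff its column space equals that of its square,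
equivalently (as shown in the paper) there is a dual matrix `X` with `M² * X = M`. -/
def DualIndexOne {n : ℕ} (M : Matrix (Fin n) (Fin n) (DualNumber ℝ)) : Prop :=
  ∃ X : Matrix (Fin n) (Fin n) (DualNumber ℝ), M * M * X = M

/-- `G` is a group inverse of the real matrix `A`. -/
def IsGroupInv {n : ℕ} (A G : Matrix (Fin n) (Fin n) ℝ) : Prop :=
  A * G * A = A ∧ G * A * G = G ∧ A * G = G * A

/-- `X` is the Moore–Penrose inverse of the real matrix `A`. -/
def IsMoorePenrose {n : ℕ} (A X : Matrix (Fin n) (Fin n) ℝ) : Prop :=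
  A * X * A = A ∧ X * A * X = X ∧ (A * X)ᵀ = A * X ∧ (X * A)ᵀ = X * A

/-- `C` is a core inverse of the real matrix `A`. -/
def IsCoreInv {n : ℕ} (A C : Matrix (Fin n) (Fin n) ℝ) : Prop :=
  A * C * A = A ∧ A * (C * C) = C ∧ (A * C)ᵀ = A * C

/-- `G` is a dual group generalized inverse (DGGI) of the dual matrix `M`. -/
def IsDGGI {n : ℕ} (M G : Matrix (Fin n) (Fin n) (DualNumber ℝ)) : Prop :=
  M * G * M = M ∧ G * M * G = G ∧ M * G = G * M

/-- `X` is a dual Moore–Penrose generalized inverse (DMPGI) of the dual matrix `M`. -/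
def IsDMPGI {n : ℕ} (M X : Matrix (Fin n) (Fin n) (DualNumber ℝ)) : Prop :=
  M * X * M = M ∧ X * M * X = X ∧ (M * X)ᵀ = M * X ∧ (X * M)ᵀ = X * M

/-- `G` is a dual core generalized inverse (DCGI) of the dual matrix `M`. -/
def IsDCGI {n : ℕ} (M G : Matrix (Fin n) (Fin n) (DualNumber ℝ)) : Prop :=
  M * G * M = M ∧ M * (G * G) = G ∧ (M * G)ᵀ = M * G

theorem core_aux {n : ℕ} {R : Type*} [CommRing R] (A C : Matrix (Fin n) (Fin n) R)
    (h1 : A * C * A = A) (h2 : A * (C * C) = C) : C * (A * A) = A := by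
  have e1 : (1 - A * C) * C = 0 := by
    rw [sub_mul, one_mul, Matrix.mul_assoc, h2, sub_self]
  have e2 : (1 - A * C) * A = 0 := by
    rw [sub_mul, one_mul, h1, sub_self]
  have e3 : A * (1 - C * A) = 0 := by
    rw [mul_sub, mul_one, ← Matrix.mul_assoc, h1, sub_self]
  have e4 : (1 - A * C) * (1 - A * C) = 1 - A * C := by
    rw [mul_sub, mul_one, ← Matrix.mul_assoc, e2, Matrix.zero_mul, sub_zero]
  have e5 : (1 - A * C) * (1 - C * A) = 1 - A * C := by
    rw [mul_sub, mul_one, ← Matrix.mul_assoc, e1, Matrix.zero_mul, sub_zero]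
  have hUV : (A + (1 - A * C)) * (C + (1 - C * A) * (1 - A * C)) = 1 := by
    rw [add_mul, mul_add, mul_add, ← Matrix.mul_assoc A, e3, e1, ← Matrix.mul_assoc, e5, e4]
    simp
  have hVU := mul_eq_one_comm.mp hUV
  have hUA : (A + (1 - A * C)) * A = A * A := by rw [add_mul, e2, add_zero]
  have h := congrArg (· * A) hVU
  simp only [Matrix.mul_assoc _ _ A, hUA, one_mul] at h
  rw [add_mul, Matrix.mul_assoc (1 - C * A), ← Matrix.mul_assoc (1 - A * C) A, e2] at h
  simpa using h

theorem core_cac {n : ℕ} {R : Type*} [CommRing R] (A C : Matrix (Fin n) (Fin n) R)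
    (h1 : A * C * A = A) (h2 : A * (C * C) = C) : C * (A * C) = C := by
  have h := core_aux A C h1 h2
  calc C * (A * C) = C * (A * (A * (C * C))) := by rw [h2]
    _ = C * (A * A) * (C * C) := by simp only [Matrix.mul_assoc]
    _ = C := by rw [h, h2]

theorem proj_unique {n : ℕ} {R : Type*} [CommRing R] (A C D : Matrix (Fin n) (Fin n) R)
    (h1 : A * C * A = A) (h3 : (A * C)ᵀ = A * C)
    (k1 : A * D * A = A) (k3 : (A * D)ᵀ = A * D) : A * C = A * D := by
  have a : (A * D) * (A * C) = A * C := by rw [← Matrix.mul_assoc, k1]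
  have b : (A * C) * (A * D) = A * D := by rw [← Matrix.mul_assoc, h1]
  have c := congrArg transpose a
  rw [transpose_mul, h3, k3, b] at c
  exact c.symm

theorem core_unique {n : ℕ} {R : Type*} [CommRing R] (A C D : Matrix (Fin n) (Fin n) R)
    (h1 : A * C * A = A) (h2 : A * (C * C) = C) (h3 : (A * C)ᵀ = A * C)
    (k1 : A * D * A = A) (k2 : A * (D * D) = D) (k3 : (A * D)ᵀ = A * D) : C = D := by
  have p := proj_unique A C D h1 h3 k1 k3
  calc C = C * (A * C) := (core_cac A C h1 h2).symm
    _ = C * (A * (A * (D * D))) := by rw [k2, p]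
    _ = C * (A * A) * (D * D) := by simp only [Matrix.mul_assoc]
    _ = D := by rw [core_aux A C h1 h2, k2]

theorem dm_mul {n : ℕ} (A B C D : Matrix (Fin n) (Fin n) ℝ) :
    dm A B * dm C D = dm (A * C) (A * D + B * C) := by
  ext i j
  · simp [dm, Matrix.mul_apply, TrivSqZeroExt.fst_sum]
  · simp [dm, Matrix.mul_apply, TrivSqZeroExt.snd_sum, Finset.sum_add_distrib, mul_comm]

theorem dm_transpose {n : ℕ} (A B : Matrix (Fin n) (Fin n) ℝ) :
    (dm A B)ᵀ = dm Aᵀ Bᵀ := rfl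

theorem dm_snd {n : ℕ} {A B C D : Matrix (Fin n) (Fin n) ℝ} (h : dm A B = dm C D) :
    B = D := by
  ext i j
  have := congrArg TrivSqZeroExt.snd (congrFun (congrFun h i) j)
  simpa [dm] using this

theorem stmt15 {n : ℕ} (A B C P : Matrix (Fin n) (Fin n) ℝ)
    (G : Matrix (Fin n) (Fin n) (DualNumber ℝ))
    (hG : IsDCGI (dm A B) G) (hC : IsCoreInv A C) (hP : IsMoorePenrose A P) :
    G = dm C (-(C * B * C)) ↔
      (A * A).rank = A.rank ∧ (1 - A * P) * B = 0 := by
  obtain ⟨g1, g2, g3⟩ := hG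
  obtain ⟨c1, c2, c3⟩ := hC
  obtain ⟨p1, -, p3, -⟩ := hP
  rw [← proj_unique A C P c1 c3 p1 p3]
  have cac := core_cac A C c1 c2
  constructor
  · rintro rfl
    refine ⟨le_antisymm (Matrix.rank_mul_le_left A A) ?_, ?_⟩
    · have : A = A * A * (C * C * A) := by
        calc A = A * (A * (C * C)) * A := by rw [c2, c1]
          _ = _ := by simp only [Matrix.mul_assoc]
      calc A.rank = (A * A * (C * C * A)).rank := by rw [← this]
        _ ≤ _ := Matrix.rank_mul_le_left _ _
    · rw [dm_mul, dm_transpose] at g3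
      rw [dm_mul, dm_mul] at g1
      have s1 := dm_snd g1
      have s3 := dm_snd g3
      have hK : A * -(C * B * C) + B * C = (1 - A * C) * (B * C) := by
        noncomm_ring
      rw [hK] at s1 s3
      set K := (1 - A * C) * (B * C) with hKd
      have k1 : (A * C) * K = 0 := by
        rw [hKd, ← Matrix.mul_assoc, mul_sub, mul_one, ← Matrix.mul_assoc (A * C) A C, c1, sub_self,
          Matrix.zero_mul]
      have k2 : K * (A * C) = K := by
        rw [hKd, Matrix.mul_assoc, Matrix.mul_assoc B, cac]
      have k3 := congrArg transpose k1
      rw [transpose_mul, s3, c3, k2, transpose_zero] at k3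
      rw [k3, Matrix.zero_mul, add_zero] at s1
      rw [sub_mul, one_mul, s1, sub_self]
  · rintro ⟨-, hB⟩
    have hB' : A * C * B = B := by
      rw [sub_mul, one_mul, sub_eq_zero] at hB
      exact hB.symm
    have hMH : dm A B * dm C (-(C * B * C)) = dm (A * C) 0 := by
      rw [dm_mul]
      congr 1
      rw [mul_neg, ← Matrix.mul_assoc, ← Matrix.mul_assoc, hB', neg_add_cancel]
    refine core_unique (dm A B) _ _ g1 g2 g3 ?_ ?_ ?_
    · rw [hMH, dm_mul, c1, hB', Matrix.zero_mul, add_zero]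
    · rw [← Matrix.mul_assoc, hMH, dm_mul, Matrix.mul_assoc, c2, Matrix.zero_mul, add_zero]
      congr 1
      rw [mul_neg, Matrix.mul_assoc C, ← Matrix.mul_assoc (A * C), Matrix.mul_assoc A, c2]
    · rw [hMH, dm_transpose, c3, transpose_zero]
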